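/- (Mollifier estimate for the periodic heat kernel, combining (eq:reg4)–(eq:reg6) in the proof of Proposition 4.4.) Let η : ℝ → ℝ be smooth, non-negative, symmetric, supported in [−1,1] with ∫_ℝ η = 1, and set η_ε(x) := ε^{−1} η(x/ε). Fix T > 0. Then there exists a constant C (depending only on η and T) such that for all ε ∈ (0,1], all t ∈ [ε², T], and all x ∈ [0,1]: ∫₀ᵗ ∫₀¹ ∫₀¹ η_ε(y−z) · ( p̂_{t−s}(x−y) − p̂_{t−s}(x−z) )² dz dy ds ≤ C ε. -/

import Mathlib

/-!
The estimate follows from pointwise bounds on the heat kernel. Write `r = t - s` for the elapsed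
time and `q_r(u) = (r + u²)⁻¹` (`cauchyProfile`). Two scalar inequalities hold for the Gaussian:
`p_r(u) ≤ 4 √r q_r(u)`, and, by the mean value theorem, `|p_r(u) - p_r(v)| ≤ 48 ε q_r(u)` when
`|u - v| ≤ ε ≤ √r`. Summing over the integer translates, and using that for `u ∈ [-1,1]` and
`r ≤ T` only the translates by `-1, 0, 1` matter up to a constant, both bounds pass to the periodic
kernel with `q_r` replaced by `K_r(u) = ∑_{|j| ≤ 1} q_r(u - j)` (`nearProfile`).

Since `K_r ≤ 3 / r`, squaring the first bound (when `r ≤ ε²`) or the second one (when `ε² ≤ r`) gives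
in both regimes
`(p̂_r(u) - p̂_r(v))² ≤ A ε² / (r + ε²) * (K_r(u) + K_r(v))` for `|u - v| ≤ ε`
(`sq_periodicHeatKernel_sub_le`). The mollifier has mass at most one in each variable, so Fubini and
`∫ K_r ≤ 3π / √r` bound the double space integral by a multiple of `ε² / (√r (r + ε²))`. This is the
derivative of `2 ε arctan (√r / ε)`, so its time integral is at most `π ε`.

The majorants are explicit integrable functions, so no measurability of the periodic kernel is needed:
a nonnegative function that fails to be integrable has Bochner integral zero.
-/

open MeasureTheory Real

/-- The Gaussian heat kernel `p_t(x) = (4πt)^{-1/2} exp(-x²/(4t))` on `ℝ`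
(junk value `0` for `t ≤ 0`). -/
noncomputable def gaussianHeatKernel (t x : ℝ) : ℝ :=
  (Real.sqrt (4 * Real.pi * t))⁻¹ * Real.exp (-(x ^ 2) / (4 * t))

/-- The 1-periodic heat kernel `p̂_t(x) = Σ_{k∈ℤ} p_t(x-k)`. -/
noncomputable def periodicHeatKernel (t x : ℝ) : ℝ :=
  ∑' k : ℤ, gaussianHeatKernel t (x - (k : ℝ))

/-! ### Cauchy profiles and their integer translates -/

/-- The rescaled Cauchy profile `(r + u²)⁻¹` that dominates the heat kernel at time `r`. -/
noncomputable def cauchyProfile (r u : ℝ) : ℝ := (r + u ^ 2)⁻¹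

/-- The sum of the Cauchy profiles centred at `-1`, `0` and `1`, the only integers that can be close
to a point of `[-1, 1]`. -/
noncomputable def nearProfile (r u : ℝ) : ℝ :=
  cauchyProfile r (u + 1) + cauchyProfile r u + cauchyProfile r (u - 1)

lemma cauchyProfile_pos {r : ℝ} (hr : 0 < r) (u : ℝ) : 0 < cauchyProfile r u := by
  unfold cauchyProfile; positivity

lemma cauchyProfile_le {r : ℝ} (hr : 0 < r) (u : ℝ) : cauchyProfile r u ≤ 1 / r := by
  unfold cauchyProfile
  rw [one_div]
  gcongr
  nlinarith [sq_nonneg u]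

lemma nearProfile_pos {r : ℝ} (hr : 0 < r) (u : ℝ) : 0 < nearProfile r u := by
  have h := cauchyProfile_pos hr
  unfold nearProfile
  linarith [h (u + 1), h u, h (u - 1)]

lemma nearProfile_le {r : ℝ} (hr : 0 < r) (u : ℝ) : nearProfile r u ≤ 3 / r := by
  have h := cauchyProfile_le hr
  have h3 : 3 / r = 1 / r + 1 / r + 1 / r := by ring
  unfold nearProfile
  linarith [h (u + 1), h u, h (u - 1)]

lemma continuous_cauchyProfile {r : ℝ} (hr : 0 < r) : Continuous (cauchyProfile r) := by
  unfold cauchyProfile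
  exact Continuous.inv₀ (by fun_prop) (fun u => by positivity)

lemma continuous_nearProfile {r : ℝ} (hr : 0 < r) : Continuous (nearProfile r) := by
  have h := continuous_cauchyProfile hr
  unfold nearProfile
  fun_prop

/-- `∫ (r + (c - y)²)⁻¹ dy` over `[0, 1]` is at most the full-line value `π / √r`. -/
lemma integral_cauchyProfile_le {r : ℝ} (hr : 0 < r) (c : ℝ) :
    ∫ y in (0 : ℝ)..1, cauchyProfile r (c - y) ≤ π / √r := by
  have hs : 0 < √r := Real.sqrt_pos.2 hr
  have hsq : √r ^ 2 = r := Real.sq_sqrt hr.le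
  have hd : ∀ y ∈ Set.uIcc (0 : ℝ) 1,
      HasDerivAt (fun y => -(Real.arctan ((c - y) / √r) / √r)) (cauchyProfile r (c - y)) y := by
    intro y _
    have h1 : HasDerivAt (fun y : ℝ => (c - y) / √r) (-1 / √r) y :=
      ((hasDerivAt_id y).const_sub c).div_const _
    refine ((h1.arctan).div_const (√r)).neg.congr_deriv ?_
    unfold cauchyProfile
    rw [div_pow, hsq]
    have h2 : 0 < r + (c - y) ^ 2 := by positivity
    field_simp
    rw [hsq]
  rw [intervalIntegral.integral_eq_sub_of_hasDerivAt hd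
    (((continuous_cauchyProfile hr).comp (by fun_prop)).intervalIntegrable _ _)]
  have h1 := Real.arctan_lt_pi_div_two ((c - 0) / √r)
  have h2 := Real.neg_pi_div_two_lt_arctan ((c - 1) / √r)
  rw [neg_sub_neg, ← sub_div]
  gcongr
  linarith

lemma integral_nearProfile_le {r : ℝ} (hr : 0 < r) (x : ℝ) :
    ∫ y in (0 : ℝ)..1, nearProfile r (x - y) ≤ 3 * (π / √r) := by
  have hc := continuous_cauchyProfile hr
  have hi : ∀ c : ℝ, IntervalIntegrable (fun y => cauchyProfile r (c - y)) volume 0 1 := fun c =>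
    (hc.comp (by fun_prop)).intervalIntegrable _ _
  have he : ∀ y, nearProfile r (x - y) = cauchyProfile r ((x + 1) - y) + cauchyProfile r (x - y)
      + cauchyProfile r ((x - 1) - y) := by
    intro y
    unfold nearProfile
    rw [sub_add_eq_add_sub, sub_right_comm]
  simp_rw [he]
  rw [intervalIntegral.integral_add ((hi _).add (hi _)) (hi _),
    intervalIntegral.integral_add (hi _) (hi _)]
  linarith [integral_cauchyProfile_le hr (x + 1), integral_cauchyProfile_le hr x,
    integral_cauchyProfile_le hr (x - 1)]

lemma summable_inv_int_sq : Summable (fun k : ℤ => ((k : ℝ) ^ 2)⁻¹) := by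
  simpa using (Real.summable_one_div_int_pow (p := 2)).2 (by norm_num)

/-- The constant in `tsum_cauchyProfile_le`, comparing the sum over all integer translates with the
three near ones. -/
noncomputable def tailConst (T : ℝ) : ℝ := 1 + 4 * (∑' k : ℤ, ((k : ℝ) ^ 2)⁻¹) * (T + 1)

/-- The sum of `cauchyProfile` over all integer translates. The translates by `|k| ≥ 2` contribute
at most `4 / k²` each, and `1 ≤ (T + 1) q_r(u)`. -/
lemma tsum_cauchyProfile_le {r T u : ℝ} (hr : 0 < r) (hrT : r ≤ T) (hu : |u| ≤ 1) :
    Summable (fun k : ℤ => cauchyProfile r (u - k)) ∧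
      ∑' k : ℤ, cauchyProfile r (u - k) ≤ tailConst T * nearProfile r u := by
  obtain ⟨hu1, hu2⟩ := abs_le.1 hu
  set near : ℤ → ℝ := fun k =>
    if k ∈ ({-1, 0, 1} : Finset ℤ) then cauchyProfile r (u - k) else 0 with hnear
  have hsum_near : HasSum near (nearProfile r u) := by
    have h : HasSum near (∑ k ∈ ({-1, 0, 1} : Finset ℤ), near k) :=
      hasSum_sum_of_ne_finset_zero (fun k hk => by simp only [hnear, if_neg hk])
    convert h using 1
    simp [hnear, nearProfile, add_assoc]
  have hmaj : HasSum (fun k : ℤ => near k + 4 * ((k : ℝ) ^ 2)⁻¹)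
      (nearProfile r u + 4 * ∑' k : ℤ, ((k : ℝ) ^ 2)⁻¹) :=
    hsum_near.add (summable_inv_int_sq.hasSum.mul_left 4)
  have hle : ∀ k : ℤ, cauchyProfile r (u - k) ≤ near k + 4 * ((k : ℝ) ^ 2)⁻¹ := by
    intro k
    by_cases hk : k ∈ ({-1, 0, 1} : Finset ℤ)
    · simp only [hnear, if_pos hk]
      have : 0 ≤ ((k : ℝ) ^ 2)⁻¹ := by positivity
      linarith
    · simp only [hnear, if_neg hk, zero_add]
      have hk2 : (k : ℝ) ≤ -2 ∨ 2 ≤ (k : ℝ) := by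
        simp only [Finset.mem_insert, Finset.mem_singleton, not_or] at hk
        have : k ≤ -2 ∨ 2 ≤ k := by omega
        exact_mod_cast this
      have hkpos : 0 < (k : ℝ) ^ 2 := by rcases hk2 with h | h <;> nlinarith
      -- `|u - k| ≥ |k| - 1 ≥ |k| / 2`
      have h4 : (k : ℝ) ^ 2 / 4 ≤ r + (u - k) ^ 2 := by
        rcases hk2 with h | h
        · nlinarith [mul_nonneg (by linarith : 0 ≤ u + 1) (by linarith : 0 ≤ -2 - (k : ℝ))]
        · nlinarith [mul_nonneg (by linarith : 0 ≤ 1 - u) (by linarith : 0 ≤ (k : ℝ) - 2)]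
      unfold cauchyProfile
      calc (r + (u - k) ^ 2)⁻¹ ≤ ((k : ℝ) ^ 2 / 4)⁻¹ := by gcongr
        _ = 4 * ((k : ℝ) ^ 2)⁻¹ := by rw [inv_div]; ring
  have hs : Summable (fun k : ℤ => cauchyProfile r (u - k)) :=
    Summable.of_nonneg_of_le (fun k => (cauchyProfile_pos hr _).le) hle hmaj.summable
  refine ⟨hs, (hasSum_le hle hs.hasSum hmaj).trans ?_⟩
  have hS : 0 ≤ ∑' k : ℤ, ((k : ℝ) ^ 2)⁻¹ := tsum_nonneg (fun k => by positivity)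
  have h1 : 1 ≤ (T + 1) * nearProfile r u := by
    have h2 : cauchyProfile r u ≤ nearProfile r u := by
      have h := cauchyProfile_pos hr
      unfold nearProfile
      linarith [h (u + 1), h (u - 1)]
    have h3 : 1 ≤ (T + 1) * cauchyProfile r u := by
      unfold cauchyProfile
      rw [← div_eq_mul_inv, le_div_iff₀ (by positivity)]
      nlinarith
    have : (T + 1) * cauchyProfile r u ≤ (T + 1) * nearProfile r u :=
      mul_le_mul_of_nonneg_left h2 (by linarith)
    linarith
  unfold tailConst
  nlinarith [mul_le_mul_of_nonneg_left h1 hS]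

/-! ### Pointwise bounds on the Gaussian kernel -/

lemma inv_sqrt_four_pi_mul_le {r : ℝ} (hr : 0 < r) : (√(4 * π * r))⁻¹ ≤ (√r)⁻¹ := by
  have hs : 0 < √r := Real.sqrt_pos.2 hr
  gcongr
  nlinarith [Real.pi_gt_three]

lemma gaussianHeatKernel_nonneg (r u : ℝ) : 0 ≤ gaussianHeatKernel r u := by
  unfold gaussianHeatKernel; positivity

lemma exp_neg_le_inv_one_add {a : ℝ} (ha : 0 ≤ a) : Real.exp (-a) ≤ (1 + a)⁻¹ := by
  rw [Real.exp_neg]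
  gcongr
  linarith [Real.add_one_le_exp a]

/-- From `exp (-a) ≤ 1 / (1 + a)` with `a = u² / (4r)`. -/
lemma gaussianHeatKernel_le {r : ℝ} (hr : 0 < r) (u : ℝ) :
    gaussianHeatKernel r u ≤ 4 * √r * cauchyProfile r u := by
  have hs : 0 < √r := Real.sqrt_pos.2 hr
  have hsq : √r ^ 2 = r := Real.sq_sqrt hr.le
  have he : Real.exp (-(u ^ 2) / (4 * r)) ≤ 4 * r * cauchyProfile r u := by
    rw [neg_div]
    refine (exp_neg_le_inv_one_add (by positivity)).trans ?_
    unfold cauchyProfile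
    rw [← div_eq_mul_inv, inv_le_comm₀ (by positivity) (by positivity), inv_div,
      div_le_iff₀ (by positivity)]
    field_simp
    nlinarith [sq_nonneg u]
  unfold gaussianHeatKernel
  calc (√(4 * π * r))⁻¹ * Real.exp (-(u ^ 2) / (4 * r))
      ≤ (√r)⁻¹ * (4 * r * cauchyProfile r u) := by
        exact mul_le_mul (inv_sqrt_four_pi_mul_le hr) (by gcongr) (by positivity) (by positivity)
    _ = 4 * √r * cauchyProfile r u := by
        field_simp
        rw [hsq]

lemma hasDerivAt_gaussianHeatKernel {r : ℝ} (hr : 0 < r) (w : ℝ) :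
    HasDerivAt (gaussianHeatKernel r)
      ((√(4 * π * r))⁻¹ * (Real.exp (-(w ^ 2) / (4 * r)) * (-w / (2 * r)))) w := by
  have h1 : HasDerivAt (fun w : ℝ => -(w ^ 2) / (4 * r)) (-w / (2 * r)) w := by
    refine (((hasDerivAt_pow 2 w).neg).div_const (4 * r)).congr_deriv ?_
    push_cast
    field_simp
    ring
  exact (h1.exp).const_mul _

lemma abs_deriv_gaussianHeatKernel_le {r : ℝ} (hr : 0 < r) (w : ℝ) :
    |(√(4 * π * r))⁻¹ * (Real.exp (-(w ^ 2) / (4 * r)) * (-w / (2 * r)))|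
      ≤ 16 * cauchyProfile r w := by
  have hs : 0 < √r := Real.sqrt_pos.2 hr
  have hsq : √r ^ 2 = r := Real.sq_sqrt hr.le
  -- quadratic decay of the exponential is needed to absorb the factor `|w|`
  have he : Real.exp (-(w ^ 2) / (4 * r)) ≤ (8 * r * cauchyProfile r w) ^ 2 := by
    have h : -(w ^ 2) / (4 * r) = (2 : ℕ) * (-(w ^ 2 / (8 * r))) := by
      push_cast; field_simp; ring
    rw [h, Real.exp_nat_mul]
    gcongr
    refine (exp_neg_le_inv_one_add (by positivity)).trans ?_
    unfold cauchyProfile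
    rw [← div_eq_mul_inv, inv_le_comm₀ (by positivity) (by positivity), inv_div,
      div_le_iff₀ (by positivity)]
    field_simp
    nlinarith [sq_nonneg w]
  have hw : |w| * √r ≤ (r + w ^ 2) / 2 := by
    nlinarith [sq_nonneg (|w| - √r), sq_abs w]
  rw [abs_mul, abs_mul, abs_div, abs_neg, abs_of_pos (by positivity : 0 < 2 * r), Real.abs_exp,
    abs_of_nonneg (by positivity : 0 ≤ (√(4 * π * r))⁻¹)]
  calc (√(4 * π * r))⁻¹ * (Real.exp (-(w ^ 2) / (4 * r)) * (|w| / (2 * r)))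
      ≤ (√r)⁻¹ * ((8 * r * cauchyProfile r w) ^ 2 * (|w| / (2 * r))) := by
        exact mul_le_mul (inv_sqrt_four_pi_mul_le hr) (by gcongr) (by positivity) (by positivity)
    _ = 32 * (|w| * √r) * cauchyProfile r w ^ 2 := by
        field_simp
        rw [hsq]
        ring
    _ ≤ 32 * ((r + w ^ 2) / 2) * cauchyProfile r w ^ 2 := by gcongr
    _ = 16 * cauchyProfile r w := by
        unfold cauchyProfile
        field_simp
        norm_num

/-- Increments of the Gaussian at scales below `√r`, by the mean value theorem. -/
lemma abs_gaussianHeatKernel_sub_le {r ε u v : ℝ} (hr : 0 < r) (hε : 0 < ε) (hεr : ε ^ 2 ≤ r)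
    (huv : |u - v| ≤ ε) :
    |gaussianHeatKernel r u - gaussianHeatKernel r v| ≤ 48 * ε * cauchyProfile r u := by
  have hb : ∀ w ∈ Set.Icc (u - ε) (u + ε),
      ‖(√(4 * π * r))⁻¹ * (Real.exp (-(w ^ 2) / (4 * r)) * (-w / (2 * r)))‖
        ≤ 48 * cauchyProfile r u := by
    intro w hw
    refine (abs_deriv_gaussianHeatKernel_le hr w).trans ?_
    have h0 : (u - w) ^ 2 ≤ ε ^ 2 := by
      exact sq_le_sq' (by linarith [hw.2]) (by linarith [hw.1])
    -- the profile is comparable at points at distance at most `√r`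
    have h1 : (r + u ^ 2) / 3 ≤ r + w ^ 2 := by
      nlinarith [sq_nonneg (u - 2 * w)]
    have h2 : cauchyProfile r w ≤ 3 * cauchyProfile r u := by
      unfold cauchyProfile
      calc (r + w ^ 2)⁻¹ ≤ ((r + u ^ 2) / 3)⁻¹ := by gcongr
        _ = 3 * (r + u ^ 2)⁻¹ := by rw [inv_div]; ring
    linarith
  obtain ⟨h1, h2⟩ := abs_le.1 huv
  have h := (convex_Icc (u - ε) (u + ε)).norm_image_sub_le_of_norm_hasDerivWithin_le
    (fun w _ => (hasDerivAt_gaussianHeatKernel hr w).hasDerivWithinAt) hb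
    (x := v) (y := u) ⟨by linarith, by linarith⟩ ⟨by linarith, by linarith⟩
  simp only [Real.norm_eq_abs] at h
  have hq := cauchyProfile_pos hr u
  calc _ ≤ 48 * cauchyProfile r u * |u - v| := h
    _ ≤ 48 * cauchyProfile r u * ε := by gcongr
    _ = _ := by ring

/-! ### Pointwise bounds on the periodic kernel -/

lemma summable_gaussianHeatKernel {r T u : ℝ} (hr : 0 < r) (hrT : r ≤ T) (hu : |u| ≤ 1) :
    Summable (fun k : ℤ => gaussianHeatKernel r (u - k)) :=
  Summable.of_nonneg_of_le (fun _ => gaussianHeatKernel_nonneg _ _)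
    (fun _ => gaussianHeatKernel_le hr _) ((tsum_cauchyProfile_le hr hrT hu).1.mul_left (4 * √r))

lemma periodicHeatKernel_nonneg (r u : ℝ) : 0 ≤ periodicHeatKernel r u :=
  tsum_nonneg (fun _ => gaussianHeatKernel_nonneg _ _)

lemma periodicHeatKernel_le {r T u : ℝ} (hr : 0 < r) (hrT : r ≤ T) (hu : |u| ≤ 1) :
    periodicHeatKernel r u ≤ 4 * √r * (tailConst T * nearProfile r u) := by
  obtain ⟨hs, hle⟩ := tsum_cauchyProfile_le hr hrT hu
  calc periodicHeatKernel r u ≤ ∑' k : ℤ, 4 * √r * cauchyProfile r (u - k) :=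
        (summable_gaussianHeatKernel hr hrT hu).tsum_le_tsum
          (fun k => gaussianHeatKernel_le hr (u - k)) (hs.mul_left _)
    _ = 4 * √r * ∑' k : ℤ, cauchyProfile r (u - k) := tsum_mul_left
    _ ≤ _ := by gcongr

lemma abs_periodicHeatKernel_sub_le {r T ε u v : ℝ} (hr : 0 < r) (hrT : r ≤ T) (hε : 0 < ε)
    (hεr : ε ^ 2 ≤ r) (hu : |u| ≤ 1) (hv : |v| ≤ 1) (huv : |u - v| ≤ ε) :
    |periodicHeatKernel r u - periodicHeatKernel r v|
      ≤ 48 * ε * (tailConst T * nearProfile r u) := by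
  obtain ⟨hs, hle⟩ := tsum_cauchyProfile_le hr hrT hu
  unfold periodicHeatKernel
  rw [← (summable_gaussianHeatKernel hr hrT hu).tsum_sub (summable_gaussianHeatKernel hr hrT hv)]
  calc _ ≤ 48 * ε * ∑' k : ℤ, cauchyProfile r (u - k) := by
        rw [← Real.norm_eq_abs]
        refine tsum_of_norm_bounded (hs.hasSum.mul_left (48 * ε)) (fun k => ?_)
        exact abs_gaussianHeatKernel_sub_le hr hε hεr (by simpa using huv)
    _ ≤ _ := by gcongr

/-- The increment bound (for `ε² ≤ r`) and the size bound (for `r ≤ ε²`) combined: up to a factor two,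
`ε² / (r + ε²)` is `min 1 (ε² / r)`. -/
lemma sq_periodicHeatKernel_sub_le {r T ε u v : ℝ} (hr : 0 < r) (hrT : r ≤ T) (hε : 0 < ε)
    (hu : |u| ≤ 1) (hv : |v| ≤ 1) (huv : |u - v| ≤ ε) :
    (periodicHeatKernel r u - periodicHeatKernel r v) ^ 2
      ≤ 13824 * tailConst T ^ 2 * (ε ^ 2 / (r + ε ^ 2)) * (nearProfile r u + nearProfile r v) := by
  have hKu := nearProfile_pos hr u
  have hKv := nearProfile_pos hr v
  have hsqle : ∀ w, r * nearProfile r w ^ 2 ≤ 3 * nearProfile r w := by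
    intro w
    have h1 := (le_div_iff₀ hr).1 (nearProfile_le hr w)
    nlinarith [nearProfile_pos hr w]
  have hL := sq_nonneg (tailConst T)
  rcases le_total (ε ^ 2) r with h | h
  · have h1 := abs_periodicHeatKernel_sub_le hr hrT hε h hu hv huv
    have hfrac : 1 / r ≤ 2 / (r + ε ^ 2) := by
      rw [div_le_div_iff₀ hr (by positivity)]
      linarith
    have hK : nearProfile r u ^ 2 ≤ 3 * nearProfile r u * (1 / r) := by
      rw [mul_one_div, le_div_iff₀ hr]
      linarith [hsqle u]
    calc (periodicHeatKernel r u - periodicHeatKernel r v) ^ 2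
        = |periodicHeatKernel r u - periodicHeatKernel r v| ^ 2 := (sq_abs _).symm
      _ ≤ (48 * ε * (tailConst T * nearProfile r u)) ^ 2 := by gcongr
      _ = 2304 * ε ^ 2 * tailConst T ^ 2 * nearProfile r u ^ 2 := by ring
      _ ≤ 2304 * ε ^ 2 * tailConst T ^ 2 * (3 * nearProfile r u * (2 / (r + ε ^ 2))) := by
          gcongr
          exact hK.trans (by gcongr)
      _ = 13824 * tailConst T ^ 2 * (ε ^ 2 / (r + ε ^ 2)) * nearProfile r u := by ring
      _ ≤ _ := by
          gcongr
          linarith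
  · have hp : ∀ w, |w| ≤ 1 → periodicHeatKernel r w ^ 2 ≤ 48 * tailConst T ^ 2 * nearProfile r w := by
      intro w hw
      have h0 := periodicHeatKernel_nonneg r w
      calc periodicHeatKernel r w ^ 2 ≤ (4 * √r * (tailConst T * nearProfile r w)) ^ 2 := by
            gcongr
            exact periodicHeatKernel_le hr hrT hw
        _ = 16 * tailConst T ^ 2 * (√r ^ 2 * nearProfile r w ^ 2) := by ring
        _ = 16 * tailConst T ^ 2 * (r * nearProfile r w ^ 2) := by rw [Real.sq_sqrt hr.le]
        _ ≤ 16 * tailConst T ^ 2 * (3 * nearProfile r w) := 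
            mul_le_mul_of_nonneg_left (hsqle w) (by positivity)
        _ = _ := by ring
    have hfrac : 1 / 2 ≤ ε ^ 2 / (r + ε ^ 2) := by
      rw [div_le_div_iff₀ (by norm_num) (by positivity)]
      linarith
    calc (periodicHeatKernel r u - periodicHeatKernel r v) ^ 2
        ≤ periodicHeatKernel r u ^ 2 + periodicHeatKernel r v ^ 2 := by
          nlinarith [mul_nonneg (periodicHeatKernel_nonneg r u) (periodicHeatKernel_nonneg r v)]
      _ ≤ 48 * tailConst T ^ 2 * (nearProfile r u + nearProfile r v) := by
          linarith [hp u hu, hp v hv]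
      _ ≤ 13824 * tailConst T ^ 2 * (1 / 2) * (nearProfile r u + nearProfile r v) := by
          nlinarith [mul_nonneg hL (by linarith : 0 ≤ nearProfile r u + nearProfile r v)]
      _ ≤ _ := by gcongr

/-! ### Integration in space -/

/-- Monotonicity of the interval integral for a nonnegative, possibly non-integrable, smaller
function. -/
lemma intervalIntegral_mono_of_nonneg {a b : ℝ} {f g : ℝ → ℝ} (hab : a ≤ b)
    (hf : ∀ x ∈ Set.Ioc a b, 0 ≤ f x) (hg : IntervalIntegrable g volume a b)
    (hfg : ∀ x ∈ Set.Ioc a b, f x ≤ g x) :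
    ∫ x in a..b, f x ≤ ∫ x in a..b, g x := by
  rw [intervalIntegral.integral_of_le hab, intervalIntegral.integral_of_le hab]
  refine integral_mono_of_nonneg ?_ ((intervalIntegrable_iff_integrableOn_Ioc_of_le hab).1 hg) ?_
  · exact (ae_restrict_iff' measurableSet_Ioc).2 (Filter.Eventually.of_forall hf)
  · exact (ae_restrict_iff' measurableSet_Ioc).2 (Filter.Eventually.of_forall hfg)

/-- A kernel with mass at most one in each variable, tested against `a(y) + a(z)`. -/
lemma integral_kernel_mul_add_le {e : ℝ → ℝ → ℝ} {a : ℝ → ℝ} (he : Continuous e.uncurry)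
    (ha : Continuous a) (ha0 : ∀ y, 0 ≤ a y) (h1 : ∀ y, ∫ z in (0 : ℝ)..1, e y z ≤ 1)
    (h2 : ∀ z, ∫ y in (0 : ℝ)..1, e y z ≤ 1) :
    ∫ y in (0 : ℝ)..1, ∫ z in (0 : ℝ)..1, e y z * (a y + a z) ≤ 2 * ∫ y in (0 : ℝ)..1, a y := by
  have hey : ∀ y, Continuous (fun z => e y z) := fun y =>
    he.comp (by fun_prop : Continuous (fun z : ℝ => (y, z)))
  have hc1 : Continuous (fun p : ℝ × ℝ => e p.1 p.2 * a p.1) := he.mul (ha.comp continuous_fst)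
  have hc2 : Continuous (fun p : ℝ × ℝ => e p.1 p.2 * a p.2) := he.mul (ha.comp continuous_snd)
  have hi1 : Continuous (fun y => ∫ z in (0 : ℝ)..1, e y z * a y) :=
    intervalIntegral.continuous_parametric_intervalIntegral_of_continuous' (μ := volume)
      (f := fun y z => e y z * a y) hc1 0 1
  have hi2 : Continuous (fun y => ∫ z in (0 : ℝ)..1, e y z * a z) :=
    intervalIntegral.continuous_parametric_intervalIntegral_of_continuous' (μ := volume)
      (f := fun y z => e y z * a z) hc2 0 1
  have hi3 : Continuous (fun z => ∫ y in (0 : ℝ)..1, e y z * a z) :=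
    intervalIntegral.continuous_parametric_intervalIntegral_of_continuous' (μ := volume)
      (f := fun z y => e y z * a z) (hc2.comp continuous_swap) 0 1
  have hsplit : ∀ y, ∫ z in (0 : ℝ)..1, e y z * (a y + a z)
      = (∫ z in (0 : ℝ)..1, e y z * a y) + ∫ z in (0 : ℝ)..1, e y z * a z := by
    intro y
    simp_rw [mul_add]
    exact intervalIntegral.integral_add (((hey y).mul_const _).intervalIntegrable _ _)
      (((hey y).mul ha).intervalIntegrable _ _)
  simp_rw [hsplit]
  rw [intervalIntegral.integral_add (hi1.intervalIntegrable _ _) (hi2.intervalIntegrable _ _),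
    MeasureTheory.intervalIntegral_intervalIntegral_swap (F := fun y z => e y z * a z)]
  · have hA : ∫ y in (0 : ℝ)..1, ∫ z in (0 : ℝ)..1, e y z * a y ≤ ∫ y in (0 : ℝ)..1, a y := by
      refine intervalIntegral.integral_mono_on zero_le_one (hi1.intervalIntegrable _ _)
        (ha.intervalIntegrable _ _) (fun y _ => ?_)
      rw [intervalIntegral.integral_mul_const]
      exact mul_le_of_le_one_left (ha0 y) (h1 y)
    have hB : ∫ z in (0 : ℝ)..1, ∫ y in (0 : ℝ)..1, e y z * a z ≤ ∫ y in (0 : ℝ)..1, a y := by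
      refine intervalIntegral.integral_mono_on zero_le_one (hi3.intervalIntegrable _ _)
        (ha.intervalIntegrable _ _) (fun z _ => ?_)
      rw [intervalIntegral.integral_mul_const]
      exact mul_le_of_le_one_left (ha0 z) (h2 z)
    linarith
  · refine (hc2.continuousOn.integrableOn_compact
      (isCompact_uIcc.prod isCompact_uIcc)).mono_set
      (Set.prod_mono Set.uIoc_subset_uIcc Set.uIoc_subset_uIcc)

lemma intervalIntegral_le_one {η : ℝ → ℝ} (hη_nonneg : ∀ x, 0 ≤ η x) (hη_int : ∫ x : ℝ, η x = 1)
    {a b : ℝ} (hab : a ≤ b) : ∫ x in a..b, η x ≤ 1 := by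
  rw [intervalIntegral.integral_of_le hab, ← hη_int]
  exact setIntegral_le_integral (integrable_of_integral_eq_one hη_int)
    (Filter.Eventually.of_forall hη_nonneg)

lemma integral_mollifier_right_le {η : ℝ → ℝ} (hη_nonneg : ∀ x, 0 ≤ η x)
    (hη_int : ∫ x : ℝ, η x = 1) {ε : ℝ} (hε : 0 < ε) (y : ℝ) :
    ∫ z in (0 : ℝ)..1, ε⁻¹ * η ((y - z) / ε) ≤ 1 := by
  simp_rw [sub_div]
  rw [intervalIntegral.integral_const_mul, intervalIntegral.inv_mul_integral_comp_sub_div]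
  refine intervalIntegral_le_one hη_nonneg hη_int ?_
  gcongr
  norm_num

lemma integral_mollifier_left_le {η : ℝ → ℝ} (hη_nonneg : ∀ x, 0 ≤ η x)
    (hη_int : ∫ x : ℝ, η x = 1) {ε : ℝ} (hε : 0 < ε) (z : ℝ) :
    ∫ y in (0 : ℝ)..1, ε⁻¹ * η ((y - z) / ε) ≤ 1 := by
  simp_rw [sub_div]
  rw [intervalIntegral.integral_const_mul, intervalIntegral.inv_mul_integral_comp_div_sub]
  refine intervalIntegral_le_one hη_nonneg hη_int ?_
  gcongr
  norm_num

/-- The double space integral at a fixed elapsed time `r`. -/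
lemma integral_space_le {η : ℝ → ℝ} (hη : Continuous η) (hη_nonneg : ∀ x, 0 ≤ η x)
    (hη_supp : ∀ x : ℝ, 1 < |x| → η x = 0) (hη_int : ∫ x : ℝ, η x = 1)
    {r T ε x : ℝ} (hr : 0 < r) (hrT : r ≤ T) (hε : 0 < ε) (hx : x ∈ Set.Icc (0 : ℝ) 1) :
    (∫ y in (0 : ℝ)..1, ∫ z in (0 : ℝ)..1, (ε⁻¹ * η ((y - z) / ε)) *
        (periodicHeatKernel r (x - y) - periodicHeatKernel r (x - z)) ^ 2)
      ≤ 82944 * π * tailConst T ^ 2 * (ε ^ 2 / (√r * (r + ε ^ 2))) := by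
  set A : ℝ := 13824 * tailConst T ^ 2 * (ε ^ 2 / (r + ε ^ 2)) with hA
  have hA0 : 0 ≤ A := by positivity
  set e : ℝ → ℝ → ℝ := fun y z => ε⁻¹ * η ((y - z) / ε) with he
  have he0 : ∀ y z, 0 ≤ e y z := fun y z => mul_nonneg (by positivity) (hη_nonneg _)
  have hec : Continuous e.uncurry := by
    have : Continuous (fun p : ℝ × ℝ => ε⁻¹ * η ((p.1 - p.2) / ε)) := by fun_prop
    exact this
  set a : ℝ → ℝ := fun y => nearProfile r (x - y) with ha
  have hac : Continuous a := (continuous_nearProfile hr).comp (by fun_prop)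
  have hgc : Continuous (fun p : ℝ × ℝ => A * (e p.1 p.2 * (a p.1 + a p.2))) :=
    continuous_const.mul (hec.mul ((hac.comp continuous_fst).add (hac.comp continuous_snd)))
  have hpt : ∀ y ∈ Set.Ioc (0 : ℝ) 1, ∀ z ∈ Set.Ioc (0 : ℝ) 1,
      e y z * (periodicHeatKernel r (x - y) - periodicHeatKernel r (x - z)) ^ 2
        ≤ A * (e y z * (a y + a z)) := by
    intro y hy z hz
    by_cases hyz : |y - z| ≤ ε
    · have h := sq_periodicHeatKernel_sub_le (T := T) (u := x - y) (v := x - z) hr hrT hε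
        (abs_le.2 ⟨by linarith [hx.1, hy.2], by linarith [hx.2, hy.1]⟩)
        (abs_le.2 ⟨by linarith [hx.1, hz.2], by linarith [hx.2, hz.1]⟩)
        (by rw [sub_sub_sub_cancel_left, abs_sub_comm]; exact hyz)
      calc _ ≤ e y z * (A * (a y + a z)) := mul_le_mul_of_nonneg_left h (he0 y z)
        _ = _ := by ring
    · have h0 : e y z = 0 := by
        simp only [he]
        rw [hη_supp, mul_zero]
        rw [abs_div, abs_of_pos hε, lt_div_iff₀ hε]
        linarith [not_le.1 hyz]
      simp [h0]
  have hgy : ∀ y, Continuous (fun z => A * (e y z * (a y + a z))) := fun y =>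
    hgc.comp (by fun_prop : Continuous (fun z : ℝ => (y, z)))
  calc _ ≤ ∫ y in (0 : ℝ)..1, ∫ z in (0 : ℝ)..1, A * (e y z * (a y + a z)) := by
        refine intervalIntegral_mono_of_nonneg zero_le_one (fun y _ => ?_) ?_ (fun y hy => ?_)
        · exact intervalIntegral.integral_nonneg zero_le_one
            (fun z _ => mul_nonneg (he0 y z) (sq_nonneg _))
        · exact (intervalIntegral.continuous_parametric_intervalIntegral_of_continuous'
            (μ := volume) (f := fun y z => A * (e y z * (a y + a z))) hgc 0 1).intervalIntegrable _ _
        · exact intervalIntegral_mono_of_nonneg zero_le_one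
            (fun z _ => mul_nonneg (he0 y z) (sq_nonneg _)) ((hgy y).intervalIntegrable _ _)
            (hpt y hy)
    _ = A * ∫ y in (0 : ℝ)..1, ∫ z in (0 : ℝ)..1, e y z * (a y + a z) := by
        simp_rw [intervalIntegral.integral_const_mul]
    _ ≤ A * (2 * ∫ y in (0 : ℝ)..1, a y) := by
        gcongr
        exact integral_kernel_mul_add_le hec hac (fun y => (nearProfile_pos hr _).le)
          (integral_mollifier_right_le hη_nonneg hη_int hε)
          (integral_mollifier_left_le hη_nonneg hη_int hε)
    _ ≤ A * (2 * (3 * (π / √r))) := by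
        gcongr
        exact integral_nearProfile_le hr x
    _ = _ := by
        have : 0 < √r := Real.sqrt_pos.2 hr
        rw [hA]
        field_simp
        ring

/-! ### Integration in time -/

/-- The time integral, computed from the primitive `2 ε arctan (√r / ε)`. -/
lemma integral_time_le {ε t : ℝ} (hε : 0 < ε) (ht : 0 ≤ t) :
    IntervalIntegrable (fun r => ε ^ 2 / (√r * (r + ε ^ 2))) volume 0 t ∧
      ∫ r in (0 : ℝ)..t, ε ^ 2 / (√r * (r + ε ^ 2)) ≤ π * ε := by
  have hc : Continuous (fun r => 2 * ε * Real.arctan (√r / ε)) := by fun_prop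
  have hd : ∀ r ∈ Set.Ioo 0 t, HasDerivAt (fun r => 2 * ε * Real.arctan (√r / ε))
      (ε ^ 2 / (√r * (r + ε ^ 2))) r := by
    intro r hr
    have hr0 := hr.1
    have hs : 0 < √r := Real.sqrt_pos.2 hr0
    have hsq : √r ^ 2 = r := Real.sq_sqrt hr0.le
    refine ((((Real.hasDerivAt_sqrt hr0.ne').div_const ε).arctan).const_mul (2 * ε)).congr_deriv ?_
    rw [div_pow, hsq]
    field_simp
    ring
  have hi : IntervalIntegrable (fun r => ε ^ 2 / (√r * (r + ε ^ 2))) volume 0 t := by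
    refine intervalIntegral.intervalIntegrable_deriv_of_nonneg hc.continuousOn ?_ ?_
    · rwa [min_eq_left ht, max_eq_right ht]
    · rw [min_eq_left ht, max_eq_right ht]
      intro r hr
      have := hr.1
      positivity
  refine ⟨hi, ?_⟩
  rw [intervalIntegral.integral_eq_sub_of_hasDerivAt_of_le ht hc.continuousOn hd hi]
  have h := Real.arctan_lt_pi_div_two (√t / ε)
  simp only [Real.sqrt_zero, zero_div, Real.arctan_zero, mul_zero, sub_zero]
  nlinarith

/-- **Mollifier estimate for the periodic heat kernel**, combining (eq:reg4)–(eq:reg6)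
in the proof of Proposition 4.4 of Hairer–Weber.  Let `η` be a smooth, non-negative,
symmetric mollifier supported in `[-1,1]` with unit integral, and `η_ε(x) = ε⁻¹η(x/ε)`.
Fix `T > 0`.  There is `C` (depending only on `η` and `T`) such that for all
`ε ∈ (0,1]`, `t ∈ [ε², T]` and `x ∈ [0,1]`:
`∫₀ᵗ ∫₀¹ ∫₀¹ η_ε(y-z) (p̂_{t-s}(x-y) - p̂_{t-s}(x-z))² dz dy ds ≤ C ε`. -/
theorem periodic_heat_kernel_mollifier_bound (η : ℝ → ℝ)
    (hη_smooth : ContDiff ℝ (⊤ : ℕ∞) η) (hη_nonneg : ∀ x, 0 ≤ η x)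
    (hη_symm : ∀ x, η (-x) = η x) (hη_supp : ∀ x : ℝ, 1 < |x| → η x = 0)
    (hη_int : ∫ x : ℝ, η x = 1)
    (T : ℝ) (hT : 0 < T) :
    ∃ C : ℝ, ∀ ε ∈ Set.Ioc (0 : ℝ) 1, ∀ t ∈ Set.Icc (ε ^ 2) T, ∀ x ∈ Set.Icc (0 : ℝ) 1,
      (∫ s in (0 : ℝ)..t, ∫ y in (0 : ℝ)..1, ∫ z in (0 : ℝ)..1,
          (ε⁻¹ * η ((y - z) / ε)) *
            (periodicHeatKernel (t - s) (x - y) - periodicHeatKernel (t - s) (x - z)) ^ 2)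
        ≤ C * ε := by
  refine ⟨82944 * π * tailConst T ^ 2 * π, fun ε hε t ht x hx => ?_⟩
  have hε0 : 0 < ε := hε.1
  have ht0 : 0 ≤ t := (sq_nonneg ε).trans ht.1
  -- pass to the elapsed time `r = t - s`
  rw [intervalIntegral.integral_comp_sub_left (fun r => ∫ y in (0 : ℝ)..1, ∫ z in (0 : ℝ)..1,
    (ε⁻¹ * η ((y - z) / ε)) * (periodicHeatKernel r (x - y) - periodicHeatKernel r (x - z)) ^ 2) t,
    sub_self, sub_zero]
  obtain ⟨hi, hle⟩ := integral_time_le hε0 ht0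
  calc _ ≤ ∫ r in (0 : ℝ)..t, 82944 * π * tailConst T ^ 2 * (ε ^ 2 / (√r * (r + ε ^ 2))) := by
        refine intervalIntegral_mono_of_nonneg ht0 (fun r _ => ?_) (hi.const_mul _) (fun r hr => ?_)
        · exact intervalIntegral.integral_nonneg zero_le_one (fun y _ =>
            intervalIntegral.integral_nonneg zero_le_one (fun z _ =>
              mul_nonneg (mul_nonneg (by positivity) (hη_nonneg _)) (sq_nonneg _)))
        · exact integral_space_le hη_smooth.continuous hη_nonneg hη_supp hη_int hr.1
            (hr.2.trans ht.2) hε0 hx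
    _ = 82944 * π * tailConst T ^ 2 * ∫ r in (0 : ℝ)..t, ε ^ 2 / (√r * (r + ε ^ 2)) :=
        intervalIntegral.integral_const_mul _ _
    _ ≤ 82944 * π * tailConst T ^ 2 * (π * ε) := by gcongr
    _ = _ := by ring
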